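/- (Weak duality for the semilinear second order continuous problem, Example 5.1.) Let A₀, A₁ be n×n matrices, B an n×r matrix, U ⊆ ℝʳ nonempty, Q₀, Q₁ ⊆ ℝⁿ, and φ : ℝⁿ × ℝⁿ → ℝ ∪ {+∞}. Let x : [0,1] → ℝⁿ with x, x' absolutely continuous, x'' ∈ L¹, satisfy x''(t) = A₀x(t) + A₁x'(t) + Bu(t) for a.e. t with u(t) ∈ U, x(0) ∈ Q₀, x'(0) ∈ Q₁. Let x* : [0,1] → ℝⁿ with x*, x*' absolutely continuous and x*'' ∈ L¹ satisfy the adjoint equation x*''(t) = A₀ᵀx*(t) − A₁ᵀx*'(t) for a.e. t ∈ [0,1], and assume t ↦ W_U(Bᵀx*(t)) is real-valued a.e. and Lebesgue integrable on [0,1]. Then φ(x(1), x'(1)) ≥ −φ*(A₁ᵀx*(1) + x*'(1), −x*(1)) − ∫₀¹ W_U(Bᵀx*(t)) dt − W_{Q₀}(−A₁ᵀx*(0) − x*'(0)) − W_{Q₁}(x*(0)), as an inequality in ℝ ∪ {±∞}. -/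

import Mathlib

open scoped RealInnerProductSpace Pointwise
open MeasureTheory Matrix

noncomputable section

abbrev En (n : ℕ) := EuclideanSpace ℝ (Fin n)

/-- Fenchel conjugate of an extended-real-valued function on a product of two
inner product spaces (inner product of pairs is the sum of componentwise inner products). -/
def fconj2 {V W : Type*} [NormedAddCommGroup V] [InnerProductSpace ℝ V]
    [NormedAddCommGroup W] [InnerProductSpace ℝ W]
    (g : V × W → EReal) (u : V) (w : W) : EReal :=
  ⨆ p : V × W, ((⟪p.1, u⟫ + ⟪p.2, w⟫ : ℝ) : EReal) - g p

/-- Fenchel conjugate on a triple product. -/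
def fconj3 {V : Type*} [NormedAddCommGroup V] [InnerProductSpace ℝ V]
    (g : V × V × V → EReal) (u₁ u₂ u₃ : V) : EReal :=
  ⨆ p : V × V × V,
    ((⟪p.1, u₁⟫ + ⟪p.2.1, u₂⟫ + ⟪p.2.2, u₃⟫ : ℝ) : EReal) - g p

/-- Fenchel conjugate on a finite power of an inner product space. -/
def fconjPi {N : ℕ} {V : Type*} [NormedAddCommGroup V] [InnerProductSpace ℝ V]
    (g : (Fin N → V) → EReal) (u : Fin N → V) : EReal :=
  ⨆ w : Fin N → V, ((∑ i, ⟪w i, u i⟫ : ℝ) : EReal) - g w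

/-- Support function `W_A`. -/
def suppFn {V : Type*} [NormedAddCommGroup V] [InnerProductSpace ℝ V]
    (A : Set V) (u : V) : EReal :=
  ⨆ x ∈ A, ((⟪x, u⟫ : ℝ) : EReal)

/-- The function `M_F(x*,y*,z*) = inf {⟨x,x*⟩+⟨y,y*⟩-⟨z,z*⟩ : (x,y,z) ∈ gph F}`. -/
def MF {V : Type*} [NormedAddCommGroup V] [InnerProductSpace ℝ V]
    (F : V → V → Set V) (x' y' z' : V) : EReal :=
  ⨅ (x : V) (y : V) (z : V) (_ : z ∈ F x y),
    ((⟪x, x'⟫ + ⟪y, y'⟫ - ⟪z, z'⟫ : ℝ) : EReal)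

/-- Hamiltonian `H_F(x,y,z*) = sup {⟨z,z*⟩ : z ∈ F(x,y)}` (`⊥` if `F(x,y) = ∅`). -/
def HF {V : Type*} [NormedAddCommGroup V] [InnerProductSpace ℝ V]
    (F : V → V → Set V) (x y z' : V) : EReal :=
  ⨆ z ∈ F x y, ((⟪z, z'⟫ : ℝ) : EReal)

/-- Locally adjoint mapping `F*(z*;(x,y,·))`. -/
def LAM {V : Type*} [NormedAddCommGroup V] [InnerProductSpace ℝ V]
    (F : V → V → Set V) (z' x y : V) : Set (V × V) :=
  {p | ∀ x₁ y₁ : V, HF F x₁ y₁ z' - HF F x y z' ≤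
    ((⟪p.1, x₁ - x⟫ + ⟪p.2, y₁ - y⟫ : ℝ) : EReal)}

/-- Argmaximum set `F_A(x,y,z*)`. -/
def FA {V : Type*} [NormedAddCommGroup V] [InnerProductSpace ℝ V]
    (F : V → V → Set V) (x y z' : V) : Set V :=
  {z ∈ F x y | ((⟪z, z'⟫ : ℝ) : EReal) = HF F x y z'}

/-- Subdifferential of an extended-real-valued function on a product of two spaces. -/
def subdiff2 {V W : Type*} [NormedAddCommGroup V] [InnerProductSpace ℝ V]
    [NormedAddCommGroup W] [InnerProductSpace ℝ W]
    (g : V × W → EReal) (u : V × W) : Set (V × W) :=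
  {p | ∀ v : V × W,
    ((⟪p.1, v.1 - u.1⟫ + ⟪p.2, v.2 - u.2⟫ : ℝ) : EReal) ≤ g v - g u}

/-- Subdifferential of a real-valued function on a product of two spaces. -/
def subdiffR2 {V W : Type*} [NormedAddCommGroup V] [InnerProductSpace ℝ V]
    [NormedAddCommGroup W] [InnerProductSpace ℝ W]
    (g : V × W → ℝ) (u : V × W) : Set (V × W) :=
  {p | ∀ v : V × W, ⟪p.1, v.1 - u.1⟫ + ⟪p.2, v.2 - u.2⟫ ≤ g v - g u}

/-- Dual cone to the cone of tangent directions of a convex set `Q` at `x₀`. -/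
def Kstar {V : Type*} [NormedAddCommGroup V] [InnerProductSpace ℝ V]
    (Q : Set V) (x₀ : V) : Set V :=
  {x' | ∀ x ∈ Q, 0 ≤ ⟪x', x - x₀⟫}

/-- Graph of a set-valued mapping. -/
def gph {V : Type*} (F : V → V → Set V) : Set (V × V × V) :=
  {p | p.2.2 ∈ F p.1 p.2.1}

/-- Convexity of an extended-real-valued function. -/
def ERealConvexOn {V : Type*} [AddCommGroup V] [Module ℝ V] (g : V → EReal) : Prop :=
  ∀ x y : V, ∀ a b : ℝ, 0 ≤ a → 0 ≤ b → a + b = 1 →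
    g (a • x + b • y) ≤ (a : EReal) * g x + (b : EReal) * g y

/-- `g` is absolutely continuous on `[0,1]` with derivative `g' ∈ L¹`. -/
def AC {n : ℕ} (g g' : ℝ → En n) : Prop :=
  MeasureTheory.IntegrableOn g' (Set.Icc (0 : ℝ) 1) ∧
    ∀ t ∈ Set.Icc (0 : ℝ) 1, g t = g 0 + ∫ s in (0 : ℝ)..t, g' s

/-- Feasible trajectory of the continuous problem `(P_C)`. -/
structure FeasTraj {n : ℕ} (F : ℝ → En n → En n → Set (En n)) (Q₀ Q₁ : Set (En n))
    (x x' x'' : ℝ → En n) : Prop where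
  int' : MeasureTheory.IntegrableOn x' (Set.Icc (0 : ℝ) 1)
  int'' : MeasureTheory.IntegrableOn x'' (Set.Icc (0 : ℝ) 1)
  hx : ∀ t ∈ Set.Icc (0 : ℝ) 1, x t = x 0 + ∫ s in (0 : ℝ)..t, x' s
  hx' : ∀ t ∈ Set.Icc (0 : ℝ) 1, x' t = x' 0 + ∫ s in (0 : ℝ)..t, x'' s
  incl : ∀ᵐ t ∂(MeasureTheory.volume.restrict (Set.Icc (0 : ℝ) 1)), x'' t ∈ F t (x t) (x' t)
  q0 : x 0 ∈ Q₀
  q1 : x' 0 ∈ Q₁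

/-! Put `ψ t := ⟪x' t, x* t⟫ - ⟪x t, A₁ᵀ x* t + x*' t⟫`. The adjoint equation is exactly what makes
`A₁ᵀ x* + x*'` a primitive of `A₀ᵀ x*`, so the state terms of `ψ'` cancel and
`ψ' t = ⟪u t, Bᵀ x* t⟫ ≤ W_U (Bᵀ x* t)`. Integrating bounds `ψ 1 - ψ 0`; the Fenchel inequality at
`(x 1, x' 1)` controls `ψ 1`, and membership of the initial data in `Q₀` and `Q₁` controls `ψ 0`. -/

open Set InnerProductSpace
open scoped Interval

section AbsolutelyContinuous

variable {X Y Z : Type*} [PseudoMetricSpace X] [PseudoMetricSpace Y] [PseudoMetricSpace Z]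
  {a b : ℝ}

lemma absolutelyContinuousOnInterval_of_dist_le {f : ℝ → X} {g : ℝ → Y} {h : ℝ → Z}
    (hf : AbsolutelyContinuousOnInterval f a b) (hg : AbsolutelyContinuousOnInterval g a b)
    (C D : ℝ) (hh : ∀ s ∈ [[a, b]], ∀ t ∈ [[a, b]],
      dist (h s) (h t) ≤ C * dist (f s) (f t) + D * dist (g s) (g t)) :
    AbsolutelyContinuousOnInterval h a b := by
  unfold AbsolutelyContinuousOnInterval at hf hg
  refine squeeze_zero' (.of_forall fun _ => Finset.sum_nonneg fun _ _ => dist_nonneg) ?_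
    (by simpa only [mul_zero, add_zero] using (hf.const_mul C).add (hg.const_mul D))
  rw [Filter.eventually_inf_principal]
  filter_upwards with I hI
  simp only [Finset.mul_sum, ← Finset.sum_add_distrib]
  exact Finset.sum_le_sum fun i hi => hh _ (hI.1 i hi).1 _ (hI.1 i hi).2

variable {E F G : Type*} [NormedAddCommGroup E] [NormedSpace ℝ E] [NormedAddCommGroup F]
  [NormedSpace ℝ F] [NormedAddCommGroup G] [NormedSpace ℝ G]

lemma dist_bilinear_le (L : E →L[ℝ] F →L[ℝ] G) (x x' : E) (y y' : F) :
    dist (L x y) (L x' y') ≤ ‖L‖ * ‖y‖ * dist x x' + ‖L‖ * ‖x'‖ * dist y y' := by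
  have h_split : L x y - L x' y' = L (x - x') y + L x' (y - y') := by
    simp only [map_sub, _root_.sub_apply]
    abel
  rw [dist_eq_norm, dist_eq_norm, dist_eq_norm, h_split]
  calc ‖L (x - x') y + L x' (y - y')‖
      ≤ ‖L‖ * ‖x - x'‖ * ‖y‖ + ‖L‖ * ‖x'‖ * ‖y - y'‖ :=
        norm_add_le_of_le (L.le_opNorm₂ _ _) (L.le_opNorm₂ _ _)
    _ = ‖L‖ * ‖y‖ * ‖x - x'‖ + ‖L‖ * ‖x'‖ * ‖y - y'‖ := by ring

lemma absolutelyContinuousOnInterval_bilinear (L : E →L[ℝ] F →L[ℝ] G) {f : ℝ → E} {g : ℝ → F}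
    (hf : AbsolutelyContinuousOnInterval f a b) (hg : AbsolutelyContinuousOnInterval g a b) :
    AbsolutelyContinuousOnInterval (fun t => L (f t) (g t)) a b := by
  obtain ⟨C, hC⟩ := hf.exists_bound
  obtain ⟨D, hD⟩ := hg.exists_bound
  refine absolutelyContinuousOnInterval_of_dist_le hf hg (‖L‖ * D) (‖L‖ * C)
    fun s hs t ht => (dist_bilinear_le L _ _ _ _).trans ?_
  gcongr
  exacts [hD s hs, hC t ht]

end AbsolutelyContinuous

/-- `f` is absolutely continuous on the interval between `a` and `b`, with derivative `f'`, in the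
form used by `AC` but for a normed space and an arbitrary interval. -/
def IsPrimitiveOn {E : Type*} [NormedAddCommGroup E] [NormedSpace ℝ E] (f f' : ℝ → E)
    (a b : ℝ) : Prop :=
  IntervalIntegrable f' volume a b ∧ ∀ t ∈ [[a, b]], f t = f a + ∫ s in a..t, f' s

lemma AC.isPrimitiveOn {n : ℕ} {f f' : ℝ → En n} (h : AC f f') : IsPrimitiveOn f f' 0 1 :=
  ⟨(intervalIntegrable_iff_integrableOn_Icc_of_le zero_le_one).2 h.1,
    uIcc_of_le (zero_le_one (α := ℝ)) ▸ h.2⟩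

section Primitive

variable {E F G : Type*} [NormedAddCommGroup E] [NormedSpace ℝ E] [NormedAddCommGroup F]
  [NormedSpace ℝ F] [NormedAddCommGroup G] [NormedSpace ℝ G] {a b : ℝ}

lemma isPrimitiveOn_intervalIntegral {f' : ℝ → E} (h : IntervalIntegrable f' volume a b) :
    IsPrimitiveOn (fun t => ∫ s in a..t, f' s) f' a b :=
  ⟨h, fun t _ => by simp only [intervalIntegral.integral_same, zero_add]⟩

namespace IsPrimitiveOn

lemma intervalIntegrable_of_mem {f f' : ℝ → E} (h : IsPrimitiveOn f f' a b) {s t : ℝ}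
    (hs : s ∈ [[a, b]]) (ht : t ∈ [[a, b]]) : IntervalIntegrable f' volume s t :=
  h.1.mono_set (uIcc_subset_uIcc hs ht)

lemma integral_eq_sub {f f' : ℝ → E} (h : IsPrimitiveOn f f' a b) :
    ∫ t in a..b, f' t = f b - f a := by
  rw [h.2 b right_mem_uIcc, add_sub_cancel_left]

lemma congr_ae {f f' g' : ℝ → E} (h : IsPrimitiveOn f f' a b)
    (hfg : f' =ᵐ[volume.restrict (Ι a b)] g') : IsPrimitiveOn f g' a b := by
  refine ⟨h.1.congr_ae hfg, fun t ht => ?_⟩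
  have hfg' : f' =ᵐ[volume.restrict (Ι a t)] g' :=
    ae_restrict_of_ae_restrict_of_subset (uIoc_subset_uIoc_of_uIcc_subset_uIcc
      (uIcc_subset_uIcc_left ht)) hfg
  rw [h.2 t ht, intervalIntegral.integral_congr_ae_restrict hfg']

lemma add {f f' g g' : ℝ → E} (hf : IsPrimitiveOn f f' a b) (hg : IsPrimitiveOn g g' a b) :
    IsPrimitiveOn (fun t => f t + g t) (fun t => f' t + g' t) a b := by
  refine ⟨hf.1.add hg.1, fun t ht => ?_⟩
  dsimp only
  rw [hf.2 t ht, hg.2 t ht, intervalIntegral.integral_add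
    (hf.intervalIntegrable_of_mem left_mem_uIcc ht) (hg.intervalIntegrable_of_mem left_mem_uIcc ht)]
  abel

lemma sub {f f' g g' : ℝ → E} (hf : IsPrimitiveOn f f' a b) (hg : IsPrimitiveOn g g' a b) :
    IsPrimitiveOn (fun t => f t - g t) (fun t => f' t - g' t) a b := by
  refine ⟨hf.1.sub hg.1, fun t ht => ?_⟩
  dsimp only
  rw [hf.2 t ht, hg.2 t ht, intervalIntegral.integral_sub
    (hf.intervalIntegrable_of_mem left_mem_uIcc ht) (hg.intervalIntegrable_of_mem left_mem_uIcc ht)]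
  abel

lemma dist_le {f f' : ℝ → E} (h : IsPrimitiveOn f f' a b) {s t : ℝ} (hs : s ∈ [[a, b]])
    (ht : t ∈ [[a, b]]) :
    dist (f s) (f t) ≤ dist (∫ r in a..s, ‖f' r‖) (∫ r in a..t, ‖f' r‖) := by
  have hs' := h.intervalIntegrable_of_mem left_mem_uIcc hs
  have ht' := h.intervalIntegrable_of_mem left_mem_uIcc ht
  rw [h.2 s hs, h.2 t ht, dist_add_left, dist_eq_norm, dist_eq_norm,
    intervalIntegral.integral_interval_sub_left hs' ht',
    intervalIntegral.integral_interval_sub_left hs'.norm ht'.norm]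
  exact intervalIntegral.norm_integral_le_abs_integral_norm

lemma absolutelyContinuousOnInterval {f f' : ℝ → E} (h : IsPrimitiveOn f f' a b) :
    AbsolutelyContinuousOnInterval f a b := by
  have h_norm := h.1.norm.absolutelyContinuousOnInterval_intervalIntegral left_mem_uIcc
  refine absolutelyContinuousOnInterval_of_dist_le h_norm h_norm 1 0 fun s hs t ht => ?_
  simpa only [one_mul, zero_mul, add_zero] using h.dist_le hs ht

lemma clm_apply [CompleteSpace E] [CompleteSpace F] (L : E →L[ℝ] F) {f f' : ℝ → E}
    (h : IsPrimitiveOn f f' a b) :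
    IsPrimitiveOn (fun t => L (f t)) (fun t => L (f' t)) a b := by
  refine ⟨⟨L.integrable_comp h.1.1, L.integrable_comp h.1.2⟩, fun t ht => ?_⟩
  dsimp only
  rw [h.2 t ht, map_add,
    L.intervalIntegral_comp_comm (h.intervalIntegrable_of_mem left_mem_uIcc ht)]

lemma ae_hasDerivAt [CompleteSpace E] {f f' : ℝ → E} (h : IsPrimitiveOn f f' a b) :
    ∀ᵐ t, t ∈ [[a, b]] → HasDerivAt f (f' t) t := by
  filter_upwards [h.1.ae_hasDerivAt_integral, volume.ae_ne (min a b), volume.ae_ne (max a b)]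
    with t h_deriv h_min h_max ht
  have h_nhds : [[a, b]] ∈ nhds t :=
    Icc_mem_nhds (ht.1.lt_of_ne h_min.symm) (ht.2.lt_of_ne h_max)
  exact ((h_deriv ht a left_mem_uIcc).const_add (f a)).congr_of_eventuallyEq
    (Filter.eventually_of_mem h_nhds h.2)

end IsPrimitiveOn

lemma isPrimitiveOn_of_ae_hasDerivAt [CompleteSpace E] {f f' : ℝ → E}
    (hf : AbsolutelyContinuousOnInterval f a b) (hf' : IntervalIntegrable f' volume a b)
    (h_deriv : ∀ᵐ t, t ∈ [[a, b]] → HasDerivAt f (f' t) t) : IsPrimitiveOn f f' a b := by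
  have h_int := isPrimitiveOn_intervalIntegral hf'
  have h_zero : ∀ᵐ t, t ∈ [[a, b]] → HasDerivAt (fun t => f t - ∫ s in a..t, f' s) 0 t := by
    filter_upwards [h_deriv, h_int.ae_hasDerivAt] with t h₁ h₂ ht
    simpa only [sub_self] using (h₁ ht).fun_sub (h₂ ht)
  obtain ⟨c, hc⟩ := (hf.fun_sub h_int.absolutelyContinuousOnInterval).const_of_ae_hasDerivAt_zero
    h_zero
  have hca : f a = c := by
    simpa only [intervalIntegral.integral_same, sub_zero] using hc a left_mem_uIcc
  exact ⟨hf', fun t ht => by rw [hca, ← hc t ht, sub_add_cancel]⟩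

lemma intervalIntegrable_bilinear (L : E →L[ℝ] F →L[ℝ] G) {f : ℝ → E} {g : ℝ → F}
    (hf : ContinuousOn f [[a, b]]) (hg : IntervalIntegrable g volume a b) :
    IntervalIntegrable (fun t => L (f t) (g t)) volume a b := by
  obtain ⟨C, hC⟩ := isCompact_uIcc.exists_bound_of_continuousOn hf
  rw [intervalIntegrable_iff] at hg ⊢
  exact L.integrable_of_bilin_of_bdd_left C
    ((hf.mono uIoc_subset_uIcc).aestronglyMeasurable measurableSet_uIoc)
    (ae_restrict_of_forall_mem measurableSet_uIoc fun t ht => hC t (uIoc_subset_uIcc ht)) hg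

lemma IsPrimitiveOn.bilinear [CompleteSpace E] [CompleteSpace F] [CompleteSpace G]
    (L : E →L[ℝ] F →L[ℝ] G) {f f' : ℝ → E} {g g' : ℝ → F}
    (hf : IsPrimitiveOn f f' a b) (hg : IsPrimitiveOn g g' a b) :
    IsPrimitiveOn (fun t => L (f t) (g t)) (fun t => L (f t) (g' t) + L (f' t) (g t)) a b := by
  have hfc := hf.absolutelyContinuousOnInterval
  have hgc := hg.absolutelyContinuousOnInterval
  refine isPrimitiveOn_of_ae_hasDerivAt (absolutelyContinuousOnInterval_bilinear L hfc hgc)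
    ((intervalIntegrable_bilinear L hfc.continuousOn hg.1).add
      (intervalIntegrable_bilinear L.flip hgc.continuousOn hf.1)) ?_
  filter_upwards [hf.ae_hasDerivAt, hg.ae_hasDerivAt] with t hft hgt ht
  exact L.hasDerivAt_of_bilinear (fun _ => hft ht) (fun _ => hgt ht)

lemma IsPrimitiveOn.inner {H : Type*} [NormedAddCommGroup H] [InnerProductSpace ℝ H]
    [CompleteSpace H] {f f' g g' : ℝ → H} (hf : IsPrimitiveOn f f' a b)
    (hg : IsPrimitiveOn g g' a b) :
    IsPrimitiveOn (fun t => ⟪f t, g t⟫) (fun t => ⟪f t, g' t⟫ + ⟪f' t, g t⟫) a b :=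
  hf.bilinear (innerSL ℝ) hg

end Primitive

section Duality

variable {V W : Type*} [NormedAddCommGroup V] [InnerProductSpace ℝ V] [NormedAddCommGroup W]
  [InnerProductSpace ℝ W]

lemma inner_le_suppFn {A : Set V} {x : V} (hx : x ∈ A) (u : V) :
    ((⟪x, u⟫ : ℝ) : EReal) ≤ suppFn A u :=
  le_iSup₂ (f := fun y (_ : y ∈ A) => ((⟪y, u⟫ : ℝ) : EReal)) x hx

lemma neg_fconj2_le (φ : V × W → EReal) (x u : V) (y w : W) :
    -fconj2 φ u w ≤ φ (x, y) - ((⟪x, u⟫ + ⟪y, w⟫ : ℝ) : EReal) := by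
  have h_fenchel : ((⟪x, u⟫ + ⟪y, w⟫ : ℝ) : EReal) - φ (x, y) ≤ fconj2 φ u w :=
    le_iSup (fun p : V × W => ((⟪p.1, u⟫ + ⟪p.2, w⟫ : ℝ) : EReal) - φ p) (x, y)
  rw [EReal.neg_le, EReal.neg_sub (.inr (EReal.coe_ne_bot _)) (.inr (EReal.coe_ne_top _)),
    add_comm, ← sub_eq_add_neg]
  exact h_fenchel

end Duality

section Hilbert

open scoped InnerProduct

variable {H K : Type*} [NormedAddCommGroup H] [InnerProductSpace ℝ H] [CompleteSpace H]
  [NormedAddCommGroup K] [InnerProductSpace ℝ K] [CompleteSpace K] {a b : ℝ}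

lemma isPrimitiveOn_adjoint_state (A₀ A₁ : H →L[ℝ] H) {p p' p'' : ℝ → H}
    (hp : IsPrimitiveOn p p' a b) (hp' : IsPrimitiveOn p' p'' a b)
    (hadj : ∀ᵐ t ∂volume.restrict (Ι a b), p'' t = (A₀†) (p t) - (A₁†) (p' t)) :
    IsPrimitiveOn (fun t => (A₁†) (p t) + p' t) (fun t => (A₀†) (p t)) a b :=
  ((hp.clm_apply (A₁†)).add hp').congr_ae <| hadj.mono fun t ht => by
    simp only [ht, add_sub_cancel]

lemma inner_state_sub_inner_costate (A₀ A₁ : H →L[ℝ] H) (B : K →L[ℝ] H) (x v p q : H) (u : K) :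
    ⟪v, q⟫ + ⟪A₀ x + A₁ v + B u, p⟫ - (⟪x, (A₀†) p⟫ + ⟪v, (A₁†) p + q⟫) = ⟪u, (B†) p⟫ := by
  simp only [inner_add_left, inner_add_right, ContinuousLinearMap.adjoint_inner_right]
  ring

lemma isPrimitiveOn_inner_sub_inner (A₀ A₁ : H →L[ℝ] H) (B : K →L[ℝ] H)
    {x x' x'' p p' p'' : ℝ → H} {u : ℝ → K}
    (hx : IsPrimitiveOn x x' a b) (hx' : IsPrimitiveOn x' x'' a b)
    (hdyn : ∀ᵐ t ∂volume.restrict (Ι a b), x'' t = A₀ (x t) + A₁ (x' t) + B (u t))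
    (hp : IsPrimitiveOn p p' a b) (hp' : IsPrimitiveOn p' p'' a b)
    (hadj : ∀ᵐ t ∂volume.restrict (Ι a b), p'' t = (A₀†) (p t) - (A₁†) (p' t)) :
    IsPrimitiveOn (fun t => ⟪x' t, p t⟫ - ⟪x t, (A₁†) (p t) + p' t⟫)
      (fun t => ⟪u t, (B†) (p t)⟫) a b :=
  ((hx'.inner hp).sub (hx.inner (isPrimitiveOn_adjoint_state A₀ A₁ hp hp' hadj))).congr_ae <|
    hdyn.mono fun t ht => by
      simp only [ht, inner_state_sub_inner_costate]

lemma IsPrimitiveOn.sub_le_setIntegral {f f' g : ℝ → ℝ} (hf : IsPrimitiveOn f f' a b)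
    (hab : a ≤ b) (hg : IntegrableOn g (Icc a b))
    (hfg : ∀ᵐ t ∂volume.restrict (Icc a b), f' t ≤ g t) :
    f b - f a ≤ ∫ t in Icc a b, g t := by
  rw [← hf.integral_eq_sub, intervalIntegral.integral_of_le hab, ← integral_Icc_eq_integral_Ioc]
  exact integral_mono_ae ((intervalIntegrable_iff_integrableOn_Icc_of_le hab).1 hf.1) hg hfg

theorem stmt19_general (hab : a ≤ b) (A₀ A₁ : H →L[ℝ] H) (B : K →L[ℝ] H) (U : Set K)
    (Q₀ Q₁ : Set H) (φ : H × H → EReal) (x x' x'' : ℝ → H) (u : ℝ → K)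
    (hx : IsPrimitiveOn x x' a b) (hx' : IsPrimitiveOn x' x'' a b)
    (hdyn : ∀ᵐ t ∂volume.restrict (Icc a b),
      u t ∈ U ∧ x'' t = A₀ (x t) + A₁ (x' t) + B (u t))
    (hq0 : x a ∈ Q₀) (hq1 : x' a ∈ Q₁) (p p' p'' : ℝ → H)
    (hp : IsPrimitiveOn p p' a b) (hp' : IsPrimitiveOn p' p'' a b)
    (hadj : ∀ᵐ t ∂volume.restrict (Icc a b), p'' t = (A₀†) (p t) - (A₁†) (p' t))
    (g : ℝ → ℝ) (hg : IntegrableOn g (Icc a b))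
    (hrepr : ∀ᵐ t ∂volume.restrict (Icc a b), suppFn U ((B†) (p t)) = (g t : EReal)) :
    -fconj2 φ ((A₁†) (p b) + p' b) (-p b) - ((∫ t in Icc a b, g t : ℝ) : EReal)
      - suppFn Q₀ (-(A₁†) (p a) - p' a) - suppFn Q₁ (p a) ≤ φ (x b, x' b) := by
  have h_restrict : volume.restrict (Ι a b) = volume.restrict (Icc a b) := by
    rw [uIoc_of_le hab, restrict_Ioc_eq_restrict_Icc]
  have h_pairing := isPrimitiveOn_inner_sub_inner A₀ A₁ B hx hx'
    (h_restrict ▸ hdyn.mono fun _ h => h.2) hp hp' (h_restrict ▸ hadj)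
  have h_control : ∀ᵐ t ∂volume.restrict (Icc a b), ⟪u t, (B†) (p t)⟫ ≤ g t := by
    filter_upwards [hdyn, hrepr] with t hu hW
    exact EReal.coe_le_coe_iff.1 (hW ▸ inner_le_suppFn hu.1 _)
  have h_boundary := h_pairing.sub_le_setIntegral hab hg h_control
  set c := ⟪x b, (A₁†) (p b) + p' b⟫ + ⟪x' b, -p b⟫ with hc
  set I := ∫ t in Icc a b, g t
  calc -fconj2 φ ((A₁†) (p b) + p' b) (-p b) - (I : EReal)
        - suppFn Q₀ (-(A₁†) (p a) - p' a) - suppFn Q₁ (p a)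
      ≤ φ (x b, x' b) - c - I - (⟪x a, -(A₁†) (p a) - p' a⟫ : ℝ) - (⟪x' a, p a⟫ : ℝ) :=
        EReal.sub_le_sub (EReal.sub_le_sub (EReal.sub_le_sub (neg_fconj2_le _ _ _ _ _) le_rfl)
          (inner_le_suppFn hq0 _)) (inner_le_suppFn hq1 _)
    _ = φ (x b, x' b) + (-c - I - ⟪x a, -(A₁†) (p a) - p' a⟫ - ⟪x' a, p a⟫ : ℝ) := by
        simp only [EReal.coe_add, EReal.coe_neg, sub_eq_add_neg, add_assoc]
    _ ≤ φ (x b, x' b) := by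
        refine add_le_of_nonpos_right (EReal.coe_nonpos.2 ?_)
        simp only [hc, inner_neg_right, inner_sub_right, inner_add_right] at h_boundary ⊢
        linarith

end Hilbert

open scoped InnerProduct in
lemma toEuclideanLin_transpose_apply {m n : Type*} [Fintype m] [DecidableEq m] [Fintype n]
    [DecidableEq n] (A : Matrix m n ℝ) (y : EuclideanSpace ℝ m) :
    toEuclideanLin Aᵀ y = ((toEuclideanLin A).toContinuousLinearMap†) y := by
  rw [← conjTranspose_eq_transpose_of_trivial, toEuclideanLin_conjTranspose_eq_adjoint,
    ← LinearMap.adjoint_toContinuousLinearMap, LinearMap.coe_toContinuousLinearMap']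

/-- weak duality for the semilinear second order continuous problem
(Example 5.1).  Here `xs, xs', xs''` stand for `x*, x*', x*''` and `g` is the a.e.
real value of `t ↦ W_U(Bᵀ x*(t))`. -/
theorem stmt19 {n r : ℕ}
    (A₀ A₁ : Matrix (Fin n) (Fin n) ℝ) (B : Matrix (Fin n) (Fin r) ℝ)
    (U : Set (En r)) (hU : U.Nonempty) (Q₀ Q₁ : Set (En n))
    (φ : En n × En n → EReal)
    (x x' x'' : ℝ → En n) (u : ℝ → En r)
    (hxAC : AC x x') (hx'AC : AC x' x'')
    (hdyn : ∀ᵐ t ∂(volume.restrict (Set.Icc (0 : ℝ) 1)),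
      u t ∈ U ∧ x'' t = Matrix.toEuclideanLin A₀ (x t) +
        Matrix.toEuclideanLin A₁ (x' t) + Matrix.toEuclideanLin B (u t))
    (hq0 : x 0 ∈ Q₀) (hq1 : x' 0 ∈ Q₁)
    (xs xs' xs'' : ℝ → En n)
    (hxsAC : AC xs xs') (hxs'AC : AC xs' xs'')
    (hadj : ∀ᵐ t ∂(volume.restrict (Set.Icc (0 : ℝ) 1)),
      xs'' t = Matrix.toEuclideanLin A₀ᵀ (xs t) - Matrix.toEuclideanLin A₁ᵀ (xs' t))
    (g : ℝ → ℝ) (hg : MeasureTheory.IntegrableOn g (Set.Icc (0 : ℝ) 1))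
    (hrepr : ∀ᵐ t ∂(volume.restrict (Set.Icc (0 : ℝ) 1)),
      suppFn U (Matrix.toEuclideanLin Bᵀ (xs t)) = ((g t : ℝ) : EReal)) :
    -(fconj2 φ (Matrix.toEuclideanLin A₁ᵀ (xs 1) + xs' 1) (-(xs 1)))
      - (((∫ t in Set.Icc (0 : ℝ) 1, g t) : ℝ) : EReal)
      - suppFn Q₀ (-(Matrix.toEuclideanLin A₁ᵀ (xs 0)) - xs' 0) - suppFn Q₁ (xs 0)
      ≤ φ (x 1, x' 1) := by
  simp only [toEuclideanLin_transpose_apply] at hadj hrepr ⊢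
  exact stmt19_general zero_le_one (toEuclideanLin A₀).toContinuousLinearMap
    (toEuclideanLin A₁).toContinuousLinearMap (toEuclideanLin B).toContinuousLinearMap U Q₀ Q₁ φ
    x x' x'' u hxAC.isPrimitiveOn hx'AC.isPrimitiveOn hdyn hq0 hq1
    xs xs' xs'' hxsAC.isPrimitiveOn hxs'AC.isPrimitiveOn hadj g hg hrepr
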